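/- Let u : ℝ² → ℝ be a smooth solution of Equation (E2): u_yy = (u_x + x)·u_xy − u_y·(u_xx + 2). Then the pair P := u·u_xx + 3u + u_y, Q := u·u_xy + x·u_y is a conservation law: ∂P/∂y = ∂Q/∂x at every point of ℝ². -/

import Mathlib

/-- Partial derivative of a function on `ℝ²` in the direction `v`. -/
noncomputable def pd (v : ℝ × ℝ) (f : ℝ × ℝ → ℝ) : ℝ × ℝ → ℝ :=
  fun p => fderiv ℝ f p v

/-- Coordinates are `(x, y)`. -/
noncomputable def dx : (ℝ × ℝ → ℝ) → ℝ × ℝ → ℝ := pd (1, 0)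
noncomputable def dy : (ℝ × ℝ → ℝ) → ℝ × ℝ → ℝ := pd (0, 1)

theorem pd_smooth (v : ℝ × ℝ) {f : ℝ × ℝ → ℝ} (hf : ContDiff ℝ (⊤ : ℕ∞) f) :
    ContDiff ℝ (⊤ : ℕ∞) (pd v f) := by
  have h : ContDiff ℝ (⊤ : ℕ∞) (fderiv ℝ f) := hf.fderiv_right (by simp)
  exact h.clm_apply contDiff_const

theorem pd_comm (v w : ℝ × ℝ) {f : ℝ × ℝ → ℝ} (hf : ContDiff ℝ (⊤ : ℕ∞) f) (p : ℝ × ℝ) :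
    pd v (pd w f) p = pd w (pd v f) p := by
  have h : ContDiff ℝ (⊤ : ℕ∞) (fderiv ℝ f) := hf.fderiv_right (by simp)
  have hd : DifferentiableAt ℝ (fderiv ℝ f) p := (h.differentiable (by simp)) p
  have key : ∀ a b : ℝ × ℝ, pd a (pd b f) p = fderiv ℝ (fderiv ℝ f) p a b := by
    intro a b
    have h2 := (hd.hasFDerivAt.clm_apply (hasFDerivAt_const b p)).fderiv
    change fderiv ℝ (fun q => fderiv ℝ f q b) p a = _
    rw [h2]
    simp
  have hs : IsSymmSndFDerivAt ℝ f p := by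
    apply hf.contDiffAt.isSymmSndFDerivAt
    rw [minSmoothness_of_isRCLikeNormedField]
    exact WithTop.coe_le_coe.2 (le_top : (2 : ℕ∞) ≤ ⊤)
  rw [key, key]
  exact hs v w

theorem pd_add (v : ℝ × ℝ) {f g : ℝ × ℝ → ℝ} (hf : ContDiff ℝ (⊤ : ℕ∞) f)
    (hg : ContDiff ℝ (⊤ : ℕ∞) g) (p : ℝ × ℝ) :
    pd v (fun q => f q + g q) p = pd v f p + pd v g p := by
  have h := ((hf.differentiable (by simp) p).hasFDerivAt.add
    (hg.differentiable (by simp) p).hasFDerivAt).fderiv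
  change fderiv ℝ (f + g) p v = _
  rw [h]; rfl

theorem pd_mul (v : ℝ × ℝ) {f g : ℝ × ℝ → ℝ} (hf : ContDiff ℝ (⊤ : ℕ∞) f)
    (hg : ContDiff ℝ (⊤ : ℕ∞) g) (p : ℝ × ℝ) :
    pd v (fun q => f q * g q) p = f p * pd v g p + g p * pd v f p := by
  have h := ((hf.differentiable (by simp) p).hasFDerivAt.mul
    (hg.differentiable (by simp) p).hasFDerivAt).fderiv
  change fderiv ℝ (f * g) p v = _
  rw [h]; rfl

/-- For a smooth solution `u` of Equation (E2)
`u_yy = (u_x + x)·u_xy − u_y·(u_xx + 2)`, the pair `P = u·u_xx + 3u + u_y`,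
`Q = u·u_xy + x·u_y` is a conservation law: `∂P/∂y = ∂Q/∂x`. -/
theorem E2_conservation_law' (u : ℝ × ℝ → ℝ)
    (hu : ContDiff ℝ (⊤ : ℕ∞) u)
    (hsol : ∀ p : ℝ × ℝ,
      dy (dy u) p = (dx u p + p.1) * dy (dx u) p - dy u p * (dx (dx u) p + 2)) :
    ∀ p : ℝ × ℝ,
      dy (fun q => u q * dx (dx u) q + 3 * u q + dy u q) p
        = dx (fun q => u q * dy (dx u) q + q.1 * dy u q) p := by
  intro p
  have hs := hsol p
  simp only [dx, dy] at hs ⊢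
  have hx := pd_smooth (1, 0) hu
  have hy := pd_smooth (0, 1) hu
  have hxx := pd_smooth (1, 0) hx
  have hxy := pd_smooth (0, 1) hx
  have h3 : ContDiff ℝ (⊤ : ℕ∞) (fun _ : ℝ × ℝ => (3 : ℝ)) := contDiff_const
  have hf : ContDiff ℝ (⊤ : ℕ∞) (fun q : ℝ × ℝ => q.1) := contDiff_fst
  have e3 : pd (0, 1) (fun _ : ℝ × ℝ => (3 : ℝ)) p = 0 := by simp [pd]
  have ef : pd (1, 0) (fun q : ℝ × ℝ => q.1) p = 1 := by
    simp [pd, fderiv_fst]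
  rw [pd_add _ ((hu.mul hxx).add (h3.mul hu)) hy, pd_add _ (hu.mul hxx) (h3.mul hu),
    pd_mul _ hu hxx, pd_mul _ h3 hu, pd_add _ (hu.mul hxy) (hf.mul hy), pd_mul _ hu hxy,
    pd_mul _ hf hy, e3, ef, pd_comm (1, 0) (0, 1) hx, pd_comm (1, 0) (0, 1) hu, hs]
  ring
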